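/- (Theorem 2: optimal scales and variance.) Consider data x¹,…,x^N ∈ ℝ^D, a matrix W̃ ∈ ℝ^{D×H}, and Gaussian variational distributions q_n = N(ν^{(n)}, T^{(n)}) on ℝ^H realized as laws of ν^{(n)} + A_n·u with u standard Gaussian and T^{(n)} = A_n·A_nᵀ, with T^{(n)}_{hh} > 0 for all n, h. Define the ELBO ℒ(λ,σ²) = (1/N)·Σ_n ∫ q_n(z)·[ log p_{σ²}(x^{(n)}|z) + log p_λ(z) − log q_n(z) ] dz for λ ∈ (0,∞)^H and σ² > 0. Then the values σ²_opt = (1/(N·D))·Σ_{n=1}^N [ tr(W̃ᵀ·W̃·T^{(n)}) + ‖W̃·ν^{(n)} − x^{(n)}‖² ] and, for each h, λ_h^opt = (1/N)·Σ_{n=1}^N √(T^{(n)}_{hh})·M( ν_h^{(n)} / √(T^{(n)}_{hh}) ) are the unique values of σ² > 0 and λ ∈ (0,∞)^H at which all partial derivatives of ℒ with respect to σ² and with respect to λ₁,…,λ_H vanish. -/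

import Mathlib

open MeasureTheory ProbabilityTheory Matrix Real

/-- The error function `erf x = (2/sqrt pi) * integral_0^x exp(-t^2) dt`. -/
noncomputable def erf (x : ℝ) : ℝ :=
  (2 / Real.sqrt Real.pi) * ∫ t in (0:ℝ)..x, Real.exp (-t ^ 2)

/-- `M a = sqrt (2/pi) * exp (-a^2/2) + a * erf (a/sqrt 2)`. -/
noncomputable def Mfun (a : ℝ) : ℝ :=
  Real.sqrt (2 / Real.pi) * Real.exp (-a ^ 2 / 2) + a * erf (a / Real.sqrt 2)

/-- Factorized Laplace prior density with scales `lam`. -/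
noncomputable def laplacePdf {H : ℕ} (lam : Fin H → ℝ) (z : Fin H → ℝ) : ℝ :=
  ∏ h, (1 / (2 * lam h)) * Real.exp (-|z h| / lam h)

/-- Gaussian observation density `p_s(x|z) = (2*pi*s)^(-D/2) * exp(-||x - W z||^2/(2*s))`. -/
noncomputable def gaussObsPdf {D H : ℕ} (W : Matrix (Fin D) (Fin H) ℝ) (s : ℝ)
    (x : Fin D → ℝ) (z : Fin H → ℝ) : ℝ :=
  (2 * Real.pi * s) ^ (-(D : ℝ) / 2) *
    Real.exp (-(∑ i, (x i - W.mulVec z i) ^ 2) / (2 * s))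

/-- The law of a random vector in `R^H` with independent standard Gaussian coordinates. -/
noncomputable def stdGaussianPi (H : ℕ) : Measure (Fin H → ℝ) :=
  Measure.pi fun _ => gaussianReal 0 1

/-!
As a function of `σ²` and of the `λ_h`, the expected log joint density of any square-integrable
random vector splits into a sum of one-variable functions `t ↦ -log (c * t) - m / t` up to positive
factors and constants, and averaging over the data only averages the moments `m`. Such a function
has derivative `(m - t) / t ^ 2`, so its only stationary point is `t = m`: the mean squared residual
per dimension for `σ²`, the mean of `|z_h|` for `λ_h`. For Gaussian laws the first is a trace plus
the squared residual at the mean, and the second is the mean of a folded normal distribution, which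
follows from `|x| = 2 * max x 0 - x` and the antiderivative `-v * pdf + (c / 2) * erf` of `x * pdf`.
-/

open Filter Topology
open scoped ENNReal NNReal

lemma hasDerivAt_erf (x : ℝ) : HasDerivAt erf (2 / √π * exp (-x ^ 2)) x := by
  have hc : Continuous fun t : ℝ => exp (-t ^ 2) := by fun_prop
  exact (intervalIntegral.integral_hasDerivAt_right (hc.intervalIntegrable _ _)
    (hc.stronglyMeasurableAtFilter _ _) hc.continuousAt).const_mul _

lemma erf_neg (x : ℝ) : erf (-x) = -erf x := by
  have h := intervalIntegral.integral_comp_neg (a := 0) (b := x) fun t : ℝ => exp (-t ^ 2)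
  simp only [neg_sq, neg_zero] at h
  rw [erf, erf, intervalIntegral.integral_symm, ← h, mul_neg]

lemma tendsto_erf_atTop : Tendsto erf atTop (𝓝 1) := by
  have hint : Integrable fun t : ℝ => exp (-t ^ 2) := by
    simpa using integrable_exp_neg_mul_sq one_pos
  have hval : 2 / √π * ∫ t in Set.Ioi (0 : ℝ), exp (-t ^ 2) = 1 := by
    have h := integral_gaussian_Ioi 1
    simp only [neg_mul, one_mul, div_one] at h
    rw [h]
    field_simp
  rw [← hval]
  exact (intervalIntegral_tendsto_integral_Ioi 0 hint.integrableOn tendsto_id).const_mul _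

section GaussianReal

variable (c : ℝ) (v : ℝ≥0)

lemma hasDerivAt_gaussianPDFReal (x : ℝ) :
    HasDerivAt (gaussianPDFReal c v) (-((x - c) / v) * gaussianPDFReal c v x) x := by
  have h : HasDerivAt (fun y : ℝ => -(y - c) ^ 2 / (2 * v)) (-((x - c) / v)) x := by
    refine ((((hasDerivAt_id x).sub_const c).pow 2).neg.div_const (2 * (v : ℝ))).congr_deriv ?_
    simp only [id, Nat.cast_ofNat, Nat.add_one_sub_one, pow_one, mul_one]
    rw [← mul_neg, mul_div_mul_left _ _ two_ne_zero, neg_div]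
  refine (h.exp.const_mul (√(2 * π * v))⁻¹).congr_deriv ?_
  rw [gaussianPDFReal]
  ring

lemma tendsto_gaussianPDFReal_atTop : Tendsto (gaussianPDFReal c v) atTop (𝓝 0) := by
  rcases eq_or_ne v 0 with rfl | hv
  · rw [gaussianPDFReal_zero_var]
    exact tendsto_const_nhds
  have hv' : (0 : ℝ) < 2 * v := by positivity
  have h : Tendsto (fun x : ℝ => -(x - c) ^ 2 / (2 * v)) atTop atBot :=
    (tendsto_neg_atTop_atBot.comp ((tendsto_pow_atTop two_ne_zero).comp
      (tendsto_atTop_add_const_right atTop (-c) tendsto_id))).atBot_div_const hv'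
  exact mul_zero (√(2 * π * v))⁻¹ ▸ (tendsto_exp_atBot.comp h).const_mul _

variable {v}

lemma hasDerivAt_erf_standardized (hv : v ≠ 0) (x : ℝ) :
    HasDerivAt (fun y => erf ((y - c) / √(2 * v))) (2 * gaussianPDFReal c v x) x := by
  have h := (hasDerivAt_erf ((x - c) / √(2 * v))).comp x
    (((hasDerivAt_id x).sub_const c).div_const √(2 * v))
  refine h.congr_deriv ?_
  have hsqrt : √(2 * π * v) = √π * √(2 * v) := by
    rw [← sqrt_mul pi_pos.le]
    ring_nf
  rw [gaussianPDFReal, hsqrt, div_pow, sq_sqrt (by positivity), neg_div]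
  field_simp

lemma setIntegral_Ioi_mul_gaussianPDFReal (hv : v ≠ 0) :
    ∫ x in Set.Ioi 0, x * gaussianPDFReal c v x
      = v * gaussianPDFReal c v 0 + c / 2 * (1 + erf (c / √(2 * v))) := by
  have hderiv (x : ℝ) : HasDerivAt
      (fun y => -v * gaussianPDFReal c v y + c / 2 * erf ((y - c) / √(2 * v)))
      (x * gaussianPDFReal c v x) x := by
    refine (((hasDerivAt_gaussianPDFReal c v x).const_mul (-v : ℝ)).add
      ((hasDerivAt_erf_standardized c hv x).const_mul (c / 2))).congr_deriv ?_
    field_simp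
    ring
  have herf : Tendsto (fun x => erf ((x - c) / √(2 * v))) atTop (𝓝 1) :=
    tendsto_erf_atTop.comp
      ((tendsto_atTop_add_const_right atTop (-c) tendsto_id).atTop_div_const (by positivity))
  have hlim := ((tendsto_gaussianPDFReal_atTop c v).const_mul (-v : ℝ)).add
    (herf.const_mul (c / 2))
  rw [integral_Ioi_of_hasDerivAt_of_nonneg' (fun x _ => hderiv x)
    (fun x hx => mul_nonneg (le_of_lt hx) (gaussianPDFReal_nonneg c v x)) hlim,
    zero_sub, neg_div, erf_neg]
  ring

lemma integral_max_zero_gaussianReal (hv : v ≠ 0) :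
    ∫ x, max x 0 ∂gaussianReal c v
      = v * gaussianPDFReal c v 0 + c / 2 * (1 + erf (c / √(2 * v))) := by
  rw [integral_gaussianReal_eq_integral_smul hv, ← setIntegral_Ioi_mul_gaussianPDFReal c hv,
    ← integral_indicator measurableSet_Ioi]
  congr with x
  rcases le_or_gt x 0 with hx | hx
  · simp [hx]
  · simp [hx, hx.le, mul_comm]

lemma integral_abs_gaussianReal (hv : v ≠ 0) :
    ∫ x, |x| ∂gaussianReal c v = √v * Mfun (c / √v) := by
  have hid : Integrable (fun x : ℝ => x) (gaussianReal c v) :=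
    (memLp_id_gaussianReal 1).integrable le_rfl
  have habs (x : ℝ) : |x| = 2 * max x 0 - x := by
    rcases le_total x 0 with hx | hx
    · rw [abs_of_nonpos hx, max_eq_right hx, mul_zero, zero_sub]
    · rw [abs_of_nonneg hx, max_eq_left hx, two_mul, add_sub_cancel_right]
  simp_rw [habs]
  rw [integral_sub (hid.pos_part.const_mul 2) hid, integral_const_mul,
    integral_max_zero_gaussianReal c hv, integral_id_gaussianReal, Mfun, gaussianPDFReal]
  have hsq : √(v : ℝ) ^ 2 = v := sq_sqrt v.coe_nonneg
  have h2 : √(2 : ℝ) ^ 2 = 2 := sq_sqrt zero_le_two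
  rw [zero_sub, neg_sq, div_pow, hsq, div_div, ← sqrt_mul v.coe_nonneg, mul_comm (v : ℝ) 2,
    sqrt_div zero_le_two, sqrt_mul (by positivity), sqrt_mul zero_le_two]
  field_simp
  linear_combination -exp (-(c ^ 2 / (2 * v))) * (√2 ^ 2 * hsq + v * h2)

end GaussianReal

section StdGaussianPi

variable {H : ℕ} (c : ℝ) (b : Fin H → ℝ)

instance isProbabilityMeasure_stdGaussianPi : IsProbabilityMeasure (stdGaussianPi H) := by
  unfold stdGaussianPi
  infer_instance

lemma hasLaw_eval_stdGaussianPi (k : Fin H) :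
    HasLaw (fun u : Fin H → ℝ => u k) (gaussianReal 0 1) (stdGaussianPi H) :=
  (measurePreserving_eval (fun _ : Fin H => gaussianReal 0 1) k).hasLaw

lemma variance_dotProduct_stdGaussianPi :
    Var[fun u => b ⬝ᵥ u; stdGaussianPi H] = ∑ k, b k ^ 2 :=
  calc Var[fun u => b ⬝ᵥ u; stdGaussianPi H]
      = Var[∑ k, fun u : Fin H → ℝ => b k * u k; Measure.pi fun _ => gaussianReal 0 1] := by
        congr 1
        ext u
        simp [dotProduct]
    _ = ∑ k, Var[fun x => b k * x; gaussianReal 0 1] :=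
        variance_sum_pi (X := fun k x => b k * x)
          fun k => (memLp_id_gaussianReal 2).const_mul (b k)
    _ = ∑ k, b k ^ 2 := Finset.sum_congr rfl fun k _ => by
        rw [variance_const_mul (b k) fun x => x, variance_fun_id_gaussianReal, NNReal.coe_one,
          mul_one]

lemma integral_dotProduct_stdGaussianPi : ∫ u, b ⬝ᵥ u ∂stdGaussianPi H = 0 := by
  have hint (k : Fin H) : Integrable (fun u : Fin H → ℝ => u k) (stdGaussianPi H) :=
    (hasLaw_eval_stdGaussianPi k).hasGaussianLaw.integrable
  unfold dotProduct
  rw [integral_finsetSum _ fun k _ => (hint k).const_mul _]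
  simp [integral_const_mul, (hasLaw_eval_stdGaussianPi _).integral_eq]

lemma hasLaw_const_add_dotProduct_stdGaussianPi :
    HasLaw (fun u => c + b ⬝ᵥ u) (gaussianReal c (∑ k, b k ^ 2).toNNReal) (stdGaussianPi H) := by
  have hid : HasGaussianLaw (fun u : Fin H → ℝ => u) (stdGaussianPi H) :=
    (iIndepFun_pi (μ := fun _ => gaussianReal 0 1) (X := fun _ : Fin H => id)
      fun _ => aemeasurable_id).hasGaussianLaw
      fun k => (hasLaw_eval_stdGaussianPi k).hasGaussianLaw
  have hdot : HasGaussianLaw (fun u => b ⬝ᵥ u) (stdGaussianPi H) :=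
    hid.map_fun (LinearMap.toContinuousLinearMap (dotProductBilin ℝ ℝ b))
  have hlaw := hdot.map_eq_gaussianReal
  rw [integral_dotProduct_stdGaussianPi, variance_dotProduct_stdGaussianPi] at hlaw
  simpa using gaussianReal_const_add ⟨hdot.aemeasurable, hlaw⟩ c

lemma integral_sq_const_add_dotProduct_stdGaussianPi :
    ∫ u, (c + b ⬝ᵥ u) ^ 2 ∂stdGaussianPi H = c ^ 2 + ∑ k, b k ^ 2 := by
  have hlaw := hasLaw_const_add_dotProduct_stdGaussianPi c b
  have hvar := variance_eq_sub hlaw.hasGaussianLaw.memLp_two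
  rw [hlaw.variance_eq, hlaw.integral_eq, variance_id_gaussianReal, integral_id_gaussianReal,
    coe_toNNReal _ (by positivity)] at hvar
  exact (sub_eq_iff_eq_add'.1 hvar.symm)

lemma integral_abs_const_add_dotProduct_stdGaussianPi (hb : 0 < ∑ k, b k ^ 2) :
    ∫ u, |c + b ⬝ᵥ u| ∂stdGaussianPi H
      = √(∑ k, b k ^ 2) * Mfun (c / √(∑ k, b k ^ 2)) := by
  have h := (hasLaw_const_add_dotProduct_stdGaussianPi c b).integral_comp
    (f := fun x : ℝ => |x|) (by fun_prop)
  rw [integral_abs_gaussianReal c (toNNReal_pos.2 hb).ne', coe_toNNReal _ hb.le] at h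
  exact h

end StdGaussianPi

section Moments

variable {D H : Type*} {K : ℕ}

lemma memLp_two_add_mulVec_apply (ν : H → ℝ) (A : Matrix H (Fin K) ℝ) (h : H) :
    MemLp (fun u => (ν + A *ᵥ u) h) 2 (stdGaussianPi K) :=
  (hasLaw_const_add_dotProduct_stdGaussianPi (ν h) (A h)).hasGaussianLaw.memLp_two

lemma integral_abs_add_mulVec_apply (ν : H → ℝ) (A : Matrix H (Fin K) ℝ) (h : H)
    (hpos : 0 < (A * Aᵀ) h h) :
    ∫ u, |(ν + A *ᵥ u) h| ∂stdGaussianPi K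
      = √((A * Aᵀ) h h) * Mfun (ν h / √((A * Aᵀ) h h)) := by
  have hdiag : (A * Aᵀ) h h = ∑ k, A h k ^ 2 := by simp [Matrix.mul_apply, sq]
  rw [hdiag] at hpos ⊢
  exact integral_abs_const_add_dotProduct_stdGaussianPi (ν h) (A h) hpos

variable [Fintype H]

lemma trace_transpose_mul_mul_self_mul_transpose {K : Type*} [Fintype D] [Fintype K]
    (W : Matrix D H ℝ) (A : Matrix H K ℝ) :
    (Wᵀ * W * (A * Aᵀ)).trace = ∑ i, ∑ k, (W * A) i k ^ 2 := by
  rw [Matrix.mul_assoc, trace_mul_comm, Matrix.mul_assoc, Matrix.mul_assoc, ← transpose_mul,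
    ← Matrix.mul_assoc]
  simp only [trace, diag_apply, Matrix.mul_apply (M := W * A), transpose_apply, sq]

lemma memLp_sub_mulVec_apply {Ω : Type*} [MeasurableSpace Ω] {P : Measure Ω} [IsFiniteMeasure P]
    {p : ℝ≥0∞} {Z : Ω → H → ℝ} (hZ : ∀ h, MemLp (fun ω => Z ω h) p P) (x : D → ℝ)
    (W : Matrix D H ℝ) (i : D) :
    MemLp (fun ω => x i - (W *ᵥ Z ω) i) p P := by
  have hW : MemLp (fun ω => (W *ᵥ Z ω) i) p P :=
    memLp_finsetSum Finset.univ fun h _ => (hZ h).const_mul (W i h)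
  exact (memLp_const (x i)).sub hW

lemma integral_sum_sq_sub_mulVec_add_mulVec [Fintype D] (x : D → ℝ) (W : Matrix D H ℝ)
    (ν : H → ℝ) (A : Matrix H (Fin K) ℝ) :
    ∫ u, ∑ i, (x i - (W *ᵥ (ν + A *ᵥ u)) i) ^ 2 ∂stdGaussianPi K
      = (Wᵀ * W * (A * Aᵀ)).trace + ∑ i, ((W *ᵥ ν) i - x i) ^ 2 := by
  have hres (i : D) (u : Fin K → ℝ) : (x i - (W *ᵥ (ν + A *ᵥ u)) i) ^ 2
      = (((W *ᵥ ν) i - x i) + (W * A) i ⬝ᵥ u) ^ 2 := by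
    rw [mulVec_add, mulVec_mulVec, Pi.add_apply, ← neg_sq, mulVec.eq_def (W * A)]
    ring
  rw [integral_finsetSum _ fun i _ =>
    (memLp_sub_mulVec_apply (memLp_two_add_mulVec_apply ν A) x W i).integrable_sq]
  simp_rw [hres, integral_sq_const_add_dotProduct_stdGaussianPi, Finset.sum_add_distrib,
    trace_transpose_mul_mul_self_mul_transpose]
  exact add_comm _ _

end Moments

/-- The function `t ↦ -log (c * t) - m / t`, to which each expected log-likelihood reduces as a
function of a single scale parameter `t`: for a Laplace law of scale `t` one has `c = 2` and `m` is
the first absolute moment; for a centred Gaussian of variance `t` one has `c = 2 * π` and `m` is the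
second moment, up to an overall factor `1 / 2`. -/
noncomputable def scaleLogLik (c m t : ℝ) : ℝ := -log (c * t) - m / t

section ScaleLogLik

variable {c m t : ℝ}

lemma hasDerivAt_scaleLogLik (hc : c ≠ 0) (ht : t ≠ 0) :
    HasDerivAt (scaleLogLik c m) ((m - t) / t ^ 2) t := by
  have hlog := ((hasDerivAt_id t).const_mul c).log (mul_ne_zero hc ht)
  have hinv := (hasDerivAt_inv ht).const_mul m
  refine (hlog.neg.sub hinv).congr_deriv ?_
  simp only [id_eq]
  field_simp
  ring

lemma deriv_scaleLogLik_eq_zero_iff (hc : c ≠ 0) (ht : t ≠ 0) :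
    deriv (scaleLogLik c m) t = 0 ↔ t = m := by
  rw [(hasDerivAt_scaleLogLik hc ht).deriv, div_eq_zero_iff, or_iff_left (pow_ne_zero 2 ht),
    sub_eq_zero, eq_comm]

lemma deriv_sum_update {ι : Type*} [Fintype ι] [DecidableEq ι] (f : ι → ℝ → ℝ) (l : ι → ℝ)
    (h : ι) (t : ℝ) :
    deriv (fun t => ∑ k, f k (Function.update l h t k)) t = deriv (f h) t := by
  simp only [Function.apply_update f, Finset.sum_update_of_mem (Finset.mem_univ h),
    deriv_add_const]

lemma stationary_iff_of_eq_scaleLogLik {ι : Type*} [Fintype ι] [DecidableEq ι]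
    {F : (ι → ℝ) → ℝ → ℝ} {a b c C m₀ : ℝ} {m : ι → ℝ} (ha : a ≠ 0) (hb : b ≠ 0) (hc : c ≠ 0)
    (hF : ∀ l s, (∀ h, 0 < l h) → 0 < s →
      F l s = a * scaleLogLik b m₀ s + ∑ h, scaleLogLik c (m h) (l h) + C)
    {l : ι → ℝ} {s : ℝ} (hl : ∀ h, 0 < l h) (hs : 0 < s) :
    ((∀ h, deriv (fun t => F (Function.update l h t) s) (l h) = 0) ∧
      deriv (fun t => F l t) s = 0) ↔ l = m ∧ s = m₀ := by
  have hscale (h : ι) : deriv (fun t => F (Function.update l h t) s) (l h) = 0 ↔ l h = m h := by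
    have hEq : (fun t => F (Function.update l h t) s) =ᶠ[𝓝 (l h)] fun t =>
        a * scaleLogLik b m₀ s + ∑ k, scaleLogLik c (m k) (Function.update l h t k) + C := by
      filter_upwards [lt_mem_nhds (hl h)] with t ht
      refine hF _ s (fun k => ?_) hs
      rcases eq_or_ne k h with rfl | hk
      · rwa [Function.update_self]
      · rw [Function.update_of_ne hk]
        exact hl k
    rw [hEq.deriv_eq, deriv_add_const, deriv_const_add, deriv_sum_update,
      deriv_scaleLogLik_eq_zero_iff hc (hl h).ne']
  have hvar : deriv (fun t => F l t) s = 0 ↔ s = m₀ := by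
    have hEq : (fun t => F l t) =ᶠ[𝓝 s] fun t =>
        a * scaleLogLik b m₀ t + ∑ h, scaleLogLik c (m h) (l h) + C := by
      filter_upwards [lt_mem_nhds hs] with t ht using hF l t hl ht
    rw [hEq.deriv_eq, deriv_add_const, deriv_add_const, deriv_const_mul_field, mul_eq_zero,
      or_iff_right ha, deriv_scaleLogLik_eq_zero_iff hb hs.ne']
  rw [hvar, funext_iff, forall_congr' hscale]

lemma mean_scaleLogLik {N : ℕ} (hN : N ≠ 0) (c t : ℝ) (m : Fin N → ℝ) :
    (1 / N : ℝ) * ∑ n, scaleLogLik c (m n) t = scaleLogLik c ((1 / N : ℝ) * ∑ n, m n) t := by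
  simp only [scaleLogLik, Finset.sum_sub_distrib, Finset.sum_const, Finset.card_univ,
    Fintype.card_fin, nsmul_eq_mul, ← Finset.sum_div]
  field_simp

variable {Ω : Type*} [MeasurableSpace Ω] {P : Measure Ω} [IsProbabilityMeasure P] {f : Ω → ℝ}

lemma integrable_scaleLogLik (hf : Integrable f P) (c t : ℝ) :
    Integrable (fun ω => scaleLogLik c (f ω) t) P :=
  (integrable_const _).sub (hf.div_const t)

lemma integral_scaleLogLik (hf : Integrable f P) (c t : ℝ) :
    ∫ ω, scaleLogLik c (f ω) t ∂P = scaleLogLik c (∫ ω, f ω ∂P) t := by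
  unfold scaleLogLik
  rw [integral_sub (integrable_const _) (hf.div_const t), integral_div, integral_const,
    probReal_univ, one_smul]

end ScaleLogLik

section ExpectedLogDensity

variable {D H : ℕ} {Ω : Type*} [MeasurableSpace Ω] {P : Measure Ω} [IsProbabilityMeasure P]

lemma log_gaussObsPdf (hD : D ≠ 0) {s : ℝ} (hs : 0 < s) (W : Matrix (Fin D) (Fin H) ℝ)
    (x : Fin D → ℝ) (z : Fin H → ℝ) :
    log (gaussObsPdf W s x z)
      = D / 2 * scaleLogLik (2 * π) ((∑ i, (x i - (W *ᵥ z) i) ^ 2) / D) s := by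
  have hpos : 0 < 2 * π * s := by positivity
  rw [gaussObsPdf, log_mul (rpow_pos_of_pos hpos _).ne' (exp_pos _).ne', log_rpow hpos, log_exp,
    scaleLogLik]
  field_simp
  ring

lemma log_laplacePdf {l : Fin H → ℝ} (hl : ∀ h, 0 < l h) (z : Fin H → ℝ) :
    log (laplacePdf l z) = ∑ h, scaleLogLik 2 |z h| (l h) := by
  have hpos (h : Fin H) : 0 < 1 / (2 * l h) := one_div_pos.2 (mul_pos two_pos (hl h))
  rw [laplacePdf, log_prod fun h _ => (mul_pos (hpos h) (exp_pos _)).ne']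
  refine Finset.sum_congr rfl fun h _ => ?_
  rw [log_mul (hpos h).ne' (exp_pos _).ne', log_exp, one_div, log_inv, scaleLogLik, neg_div,
    sub_eq_add_neg]

lemma integral_log_gaussObsPdf_add_log_laplacePdf (hD : D ≠ 0) {Z : Ω → Fin H → ℝ}
    (hZ : ∀ h, MemLp (fun ω => Z ω h) 2 P) {l : Fin H → ℝ} (hl : ∀ h, 0 < l h) {s : ℝ}
    (hs : 0 < s) (W : Matrix (Fin D) (Fin H) ℝ) (x : Fin D → ℝ) :
    ∫ ω, (log (gaussObsPdf W s x (Z ω)) + log (laplacePdf l (Z ω))) ∂P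
      = D / 2 * scaleLogLik (2 * π) ((∫ ω, ∑ i, (x i - (W *ᵥ Z ω) i) ^ 2 ∂P) / D) s
        + ∑ h, scaleLogLik 2 (∫ ω, |Z ω h| ∂P) (l h) := by
  have hres : Integrable (fun ω => (∑ i, (x i - (W *ᵥ Z ω) i) ^ 2) / D) P :=
    (integrable_finsetSum _ fun i _ => (memLp_sub_mulVec_apply hZ x W i).integrable_sq).div_const _
  have habs (h : Fin H) : Integrable (fun ω => |Z ω h|) P := ((hZ h).integrable one_le_two).abs
  simp_rw [log_gaussObsPdf hD hs, log_laplacePdf hl]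
  rw [integral_add ((integrable_scaleLogLik hres _ _).const_mul _)
      (integrable_finsetSum _ fun h _ => integrable_scaleLogLik (habs h) _ _),
    integral_const_mul, integral_scaleLogLik hres, integral_div,
    integral_finsetSum _ fun h _ => integrable_scaleLogLik (habs h) _ _]
  simp_rw [integral_scaleLogLik (habs _)]

end ExpectedLogDensity

theorem optimal_scales_and_variance_general
    {Ω : Type*} [MeasurableSpace Ω] (P : Measure Ω) [IsProbabilityMeasure P]
    (N D H : ℕ) (hN : 0 < N) (hD : 0 < D)
    (x : Fin N → Fin D → ℝ) (W : Matrix (Fin D) (Fin H) ℝ)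
    (Z : Fin N → Ω → Fin H → ℝ) (hZ : ∀ n h, MemLp (fun ω => Z n ω h) 2 P)
    (Hq : ℝ) (ELBO : (Fin H → ℝ) → ℝ → ℝ)
    (hELBO : ∀ l s, ELBO l s = (1 / N : ℝ) * ∑ n, (∫ ω,
      (log (gaussObsPdf W s (x n) (Z n ω)) + log (laplacePdf l (Z n ω))) ∂P) + Hq)
    (σ2opt : ℝ)
    (hσ2opt : σ2opt = (1 / (N * D) : ℝ) * ∑ n, ∫ ω, ∑ i, (x n i - (W *ᵥ Z n ω) i) ^ 2 ∂P)
    (lamopt : Fin H → ℝ)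
    (hlamopt : ∀ h, lamopt h = (1 / N : ℝ) * ∑ n, ∫ ω, |Z n ω h| ∂P)
    (l : Fin H → ℝ) (s : ℝ) (hl : ∀ h, 0 < l h) (hs : 0 < s) :
    ((∀ h, deriv (fun t : ℝ => ELBO (Function.update l h t) s) (l h) = 0) ∧
        deriv (fun t : ℝ => ELBO l t) s = 0) ↔ (l = lamopt ∧ s = σ2opt) := by
  have hσ : σ2opt = (1 / N : ℝ) * ∑ n, (∫ ω, ∑ i, (x n i - (W *ᵥ Z n ω) i) ^ 2 ∂P) / D := by
    rw [hσ2opt, ← Finset.sum_div]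
    field_simp
  refine stationary_iff_of_eq_scaleLogLik (F := ELBO) (a := D / 2) (b := 2 * π) (c := 2) (C := Hq)
    (by positivity) (by positivity) two_ne_zero (fun l s hl hs => ?_) hl hs
  rw [hELBO]
  congr 1
  simp_rw [integral_log_gaussObsPdf_add_log_laplacePdf hD.ne' (hZ _) hl hs,
    Finset.sum_add_distrib, ← Finset.mul_sum]
  rw [Finset.sum_comm, mul_add, mul_left_comm, mean_scaleLogLik hN.ne', ← hσ, Finset.mul_sum]
  simp only [mean_scaleLogLik hN.ne', ← hlamopt]

/-- **Theorem 2 (optimal scales and variance).**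
For Gaussian variational distributions `q_n = N(nu_n, T_n)` realized as the laws of
`nu_n + A_n u` with `u` standard Gaussian and `T_n = A_n A_n^T` having positive diagonal,
the values `sigma2opt` and `lamopt` given by the stated analytic formulas are the unique
values of `sigma^2 > 0` and `lam` in `(0, +inf)^H` at which all partial derivatives of
the ELBO with respect to `sigma^2` and the `lam_h` vanish.  Here `Hq` is the
`(lam, sigma^2)`-independent entropy contribution `-(1/N) * sum_n int q_n log q_n`
of the ELBO. -/
theorem optimal_scales_and_variance
    (N D H : ℕ) (hN : 0 < N) (hD : 0 < D)
    (x : Fin N → Fin D → ℝ) (W : Matrix (Fin D) (Fin H) ℝ)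
    (ν : Fin N → Fin H → ℝ) (A : Fin N → Matrix (Fin H) (Fin H) ℝ)
    (T : Fin N → Matrix (Fin H) (Fin H) ℝ) (hT : ∀ n, T n = A n * (A n)ᵀ)
    (hTpos : ∀ n h, 0 < T n h h)
    (Hq : ℝ)
    (ELBO : (Fin H → ℝ) → ℝ → ℝ)
    (hELBO : ∀ l s, ELBO l s = (1 / N : ℝ) * ∑ n, (∫ u : Fin H → ℝ,
        (Real.log (gaussObsPdf W s (x n) (ν n + (A n).mulVec u)) +
          Real.log (laplacePdf l (ν n + (A n).mulVec u))) ∂(stdGaussianPi H)) + Hq)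
    (σ2opt : ℝ)
    (hσ2opt : σ2opt = (1 / (N * D) : ℝ) * ∑ n,
      (Matrix.trace (Wᵀ * W * T n) + ∑ i, (W.mulVec (ν n) i - x n i) ^ 2))
    (lamopt : Fin H → ℝ)
    (hlamopt : ∀ h, lamopt h = (1 / N : ℝ) * ∑ n,
      Real.sqrt (T n h h) * Mfun (ν n h / Real.sqrt (T n h h))) :
    ∀ (l : Fin H → ℝ) (s : ℝ), (∀ h, 0 < l h) → 0 < s →
      (((∀ h, deriv (fun t : ℝ => ELBO (Function.update l h t) s) (l h) = 0) ∧
          deriv (fun t : ℝ => ELBO l t) s = 0) ↔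
        (l = lamopt ∧ s = σ2opt)) := by
  refine optimal_scales_and_variance_general (stdGaussianPi H) N D H hN hD x W
    (fun n u => ν n + A n *ᵥ u) (fun n => memLp_two_add_mulVec_apply (ν n) (A n)) Hq ELBO
    hELBO σ2opt ?_ lamopt fun h => ?_
  · simp_rw [hσ2opt, integral_sum_sq_sub_mulVec_add_mulVec, hT]
  · rw [hlamopt]
    simp_rw [integral_abs_add_mulVec_apply _ _ _ (hT _ ▸ hTpos _ _), hT]
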